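/- arXiv:2309.11229 — 2 statements merged into one kernel-verified Lean document; each statement's English description precedes it below -/
import Mathlib

section
/- Let r be an even positive integer, n = 2r, f : F → 𝔽₂ defined by f(x) = tr(x^{2^r + 3}), and let K = {x ∈ F : x^{2^r} = x} be the subfield of F with 2^r elements. For every a ∈ F with a ≠ 0: if a ∈ K and a = c³ for some c ∈ K (a is a nonzero cube in K), then the linear kernel E_{D_a f} has cardinality 2^{r+2}; if a ∈ K and a is not a cube of an element of K, then E_{D_a f} has cardinality 2^r; if a ∉ K, then E_{D_a f} has cardinality 4. -/
noncomputable section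

/-- `Fq n` is the finite field with `2 ^ n` elements. -/
abbrev Fq (n : ℕ) : Type := GaloisField 2 n

/-- The absolute trace map `tr x = x + x^2 + x^4 + ⋯ + x^(2^(n-1))` from `Fq n` to `𝔽₂`. -/
def tr {n : ℕ} (x : Fq n) : ZMod 2 := Algebra.trace (ZMod 2) (Fq n) x

/-- The derivative of `f` with respect to `a`. -/
def der {n : ℕ} (f : Fq n → ZMod 2) (a : Fq n) : Fq n → ZMod 2 :=
  fun x => f x + f (x + a)

/-- Iterated derivatives along a list of directions (head applied last/outermost). -/
def derIter {n : ℕ} (f : Fq n → ZMod 2) : List (Fq n) → (Fq n → ZMod 2)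
  | [] => f
  | a :: as => der (derIter f as) a

/-- `g` has algebraic degree at most `r`: all `(r+1)`-th order derivatives vanish. -/
def degLE {n : ℕ} (g : Fq n → ZMod 2) (r : ℕ) : Prop :=
  ∀ l : List (Fq n), l.length = r + 1 → derIter g l = fun _ => 0

/-- Hamming distance between two Boolean functions on `Fq n`. -/
def hdist {n : ℕ} (f g : Fq n → ZMod 2) : ℕ :=
  {x : Fq n | f x ≠ g x}.ncard

/-- The `r`-th order nonlinearity of `f`. -/
def nl {n : ℕ} (r : ℕ) (f : Fq n → ZMod 2) : ℕ :=
  sInf {d : ℕ | ∃ g : Fq n → ZMod 2, degLE g r ∧ d = hdist f g}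

/-- The linear kernel of `f`: directions along which the derivative is constant. -/
def linKer {n : ℕ} (f : Fq n → ZMod 2) : Set (Fq n) :=
  {b | ∃ c : ZMod 2, ∀ x, der f b x = c}

/-- The weight of a Boolean function on `Fq n`. -/
def wt {n : ℕ} (f : Fq n → ZMod 2) : ℕ := {x : Fq n | f x = 1}.ncard


section helpers

variable {F : Type} [Field F] [CharP F 2]

lemma aux_two : (2 : F) = 0 := CharTwo.two_eq_zero

/-- The expansion of the second derivative of `x ^ 3 * σ x`. -/
lemma aux_expand (a b x as bs xs : F) :
    (xs * x ^ 3 + (xs + as) * (x + a) ^ 3 + ((xs + bs) * (x + b) ^ 3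
      + (xs + bs + as) * (x + b + a) ^ 3)) + (as * a ^ 3 + (bs * b ^ 3
      + (bs + as) * (b + a) ^ 3))
    = xs * (a ^ 2 * b + b ^ 2 * a) + x * (a ^ 2 * bs + b ^ 2 * as) + x ^ 2 * (a * bs + b * as) := by
  have h := aux_two (F := F)
  linear_combination (3 * xs * x * a * b + 3 * xs * x * a ^ 2 + 3 * xs * x * b ^ 2
    + 3 * xs * x ^ 2 * a + 3 * xs * x ^ 2 * b + 2 * xs * x ^ 3 + xs * a * b ^ 2 + xs * a ^ 2 * b
    + xs * a ^ 3 + xs * b ^ 3 + 3 * x * as * a * b + 3 * x * as * a ^ 2 + x * as * b ^ 2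
    + 3 * x * a * bs * b + x * a ^ 2 * bs + 3 * x * bs * b ^ 2 + 3 * x ^ 2 * as * a
    + x ^ 2 * as * b + x ^ 2 * a * bs + 3 * x ^ 2 * bs * b + x ^ 3 * as + x ^ 3 * bs
    + 3 * as * a * b ^ 2 + 3 * as * a ^ 2 * b + 2 * as * a ^ 3 + as * b ^ 3
    + 3 * a * bs * b ^ 2 + 3 * a ^ 2 * bs * b + a ^ 3 * bs + 2 * bs * b ^ 3) * h

/-- The kernel condition. -/
def Cond (σ : F →+* F) (a b : F) : Prop :=
  (σ b * (a + σ a) ^ 2 + σ a * (b + σ b) ^ 2) ^ 2 = a * σ b + b * σ a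

lemma aux_fix_prod (σ : F →+* F) (hσ : ∀ x, σ (σ x) = x) (a b : F) (h : Cond σ a b) :
    (a + σ a) * (b + σ b) * ((a + σ a) + (b + σ b)) = 0 := by
  have h2 := aux_two (F := F)
  unfold Cond at h
  have h' := congrArg σ h
  simp only [map_add, map_mul, map_pow, hσ] at h'
  have : ((a + σ a) * (b + σ b) * ((a + σ a) + (b + σ b))) ^ 2 = 0 := by
    have e : (a + σ a) * (b + σ b) * ((a + σ a) + (b + σ b))
      = (σ b * (a + σ a) ^ 2 + σ a * (b + σ b) ^ 2) + (b * (σ a + a) ^ 2 + a * (σ b + b) ^ 2) := by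
      ring
    rw [e, CharTwo.add_sq, h, h']
    linear_combination (a * σ b + b * σ a) * h2
  exact pow_eq_zero_iff (two_ne_zero) |>.1 this

lemma aux_add_eq_zero {x y : F} : x + y = 0 ↔ x = y := CharTwo.add_eq_zero

lemma cond_fixed (σ : F →+* F) (a b : F) (ha : σ a = a) (ha0 : a ≠ 0) :
    Cond σ a b ↔ (b + σ b = 0 ∨ a * (b + σ b) ^ 3 = 1) := by
  have h2 := aux_two (F := F)
  unfold Cond
  rw [ha, CharTwo.add_self_eq_zero]
  have e : (σ b * 0 ^ 2 + a * (b + σ b) ^ 2) ^ 2 = a * σ b + b * a ↔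
     a * ((b + σ b) * (a * (b + σ b) ^ 3 - 1)) = 0 := by
    constructor <;> intro h <;> linear_combination h
  rw [e]
  simp [ha0, sub_eq_zero]

lemma cond_nonfixed (σ : F →+* F) (hσ : ∀ x, σ (σ x) = x) (a b : F) (ha : σ a ≠ a) :
    Cond σ a b ↔ b ∈ ({0, ((a + σ a) ^ 3)⁻¹, a, a + ((a + σ a) ^ 3)⁻¹} : Set F) := by
  have h2 := aux_two (F := F)
  have hA : a + σ a ≠ 0 := fun h => ha (aux_add_eq_zero.1 h).symm
  have key : ∀ b, σ b = b → (Cond σ a b ↔ (b = 0 ∨ b = ((a + σ a) ^ 3)⁻¹)) := by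
    intro b hb
    unfold Cond
    rw [hb, CharTwo.add_self_eq_zero]
    have e : (b * (a + σ a) ^ 2 + σ a * 0 ^ 2) ^ 2 = a * b + b * σ a ↔
       (a + σ a) * (b * (b * (a + σ a) ^ 3 - 1)) = 0 := by
      constructor <;> intro h <;> linear_combination h
    rw [e]
    simp only [mul_eq_zero, hA, false_or, sub_eq_zero]
    rw [← mul_inv_eq_one₀ (b := ((a + σ a) ^ 3)⁻¹) (inv_ne_zero (pow_ne_zero 3 hA)), inv_inv]
  have shift : ∀ b, Cond σ a b ↔ Cond σ a (a + b) := by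
    intro b
    unfold Cond
    have e1 : (σ (a + b) * (a + σ a) ^ 2 + σ a * ((a + b) + σ (a + b)) ^ 2)
       = (σ b * (a + σ a) ^ 2 + σ a * (b + σ b) ^ 2) := by
      rw [map_add]
      linear_combination (σ a * (a + σ a) ^ 2 + σ a * (a + σ a) * (b + σ b)) * h2
    have e2 : a * σ (a + b) + (a + b) * σ a = a * σ b + b * σ a := by
      rw [map_add]; linear_combination (a * σ a) * h2
    rw [e1, e2]
  have hinv : σ (((a + σ a) ^ 3)⁻¹) = ((a + σ a) ^ 3)⁻¹ := by
    rw [map_inv₀, map_pow, map_add, hσ, add_comm]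
  simp only [Set.mem_insert_iff, Set.mem_singleton_iff]
  constructor
  · intro h
    have hp := aux_fix_prod σ hσ a b h
    rw [mul_eq_zero, mul_eq_zero] at hp
    rcases hp with (hp | hp) | hp
    · exact absurd hp hA
    · rcases (key b (aux_add_eq_zero.1 hp).symm).1 h with h | h <;> simp [h]
    · have hb : σ (a + b) = a + b := by
        rw [map_add]; apply aux_add_eq_zero.1; linear_combination hp
      have aab : a + (a + b) = b := by linear_combination a * h2
      rcases (key _ hb).1 ((shift b).1 h) with h | h
      · right; right; left; rw [← aab, h, add_zero]
      · right; right; right; rw [← h, aab]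
  · have h0 := (key 0 (map_zero σ)).2 (Or.inl rfl)
    have h1 := (key _ hinv).2 (Or.inr rfl)
    rintro (h | h | h | h)
    · rw [h]; exact h0
    · rw [h]; exact h1
    · have := (shift 0).1 h0
      rw [add_zero] at this
      rwa [h]
    · rw [h]; exact (shift _).1 h1

lemma card_nonfixed (σ : F →+* F) (hσ : ∀ x, σ (σ x) = x) (a : F) (ha : σ a ≠ a) :
    {b | Cond σ a b}.ncard = 4 := by
  have e : {b | Cond σ a b} = ({0, ((a + σ a) ^ 3)⁻¹, a, a + ((a + σ a) ^ 3)⁻¹} : Set F) := by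
    ext b; exact cond_nonfixed σ hσ a b ha
  have hA : a + σ a ≠ 0 := fun h => ha (aux_add_eq_zero.1 h).symm
  have hinv : σ (((a + σ a) ^ 3)⁻¹) = ((a + σ a) ^ 3)⁻¹ := by
    rw [map_inv₀, map_pow, map_add, hσ, add_comm]
  have hv : ((a + σ a) ^ 3)⁻¹ ≠ 0 := inv_ne_zero (pow_ne_zero _ hA)
  rw [e]
  generalize ((a + σ a) ^ 3)⁻¹ = v at *
  have ha0 : a ≠ 0 := by rintro rfl; simp at ha
  have hav : v ≠ a := by rintro rfl; exact ha hinv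
  classical
  rw [show ({0, v, a, a + v} : Set F) = (({0, v, a, a + v} : Finset F) : Set F) by simp,
    Set.ncard_coe_finset]
  rw [Finset.card_insert_of_notMem, Finset.card_insert_of_notMem, Finset.card_insert_of_notMem,
    Finset.card_singleton]
  · simp [hv]
  · simp [hav, ha0]
  · simp only [Finset.mem_insert, Finset.mem_singleton, not_or]
    refine ⟨hv.symm, ha0.symm, fun h => hav ?_⟩
    exact (aux_add_eq_zero.1 h.symm).symm

/-- The relative trace as an additive map. -/
def tau (σ : F →+* F) : F →+ F := AddMonoidHom.id F + σ.toAddMonoidHom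

lemma tau_apply (σ : F →+* F) (x : F) : tau σ x = x + σ x := rfl

lemma tau_facts [Finite F] (σ : F →+* F) (hσ : ∀ x, σ (σ x) = x) (q : ℕ) (hq : 1 < q)
    (hσq : ∀ x, σ x = x ^ q) (hc : Nat.card F = q * q) :
    Nat.card (tau σ).ker = q ∧ ∀ y, σ y = y → y ∈ (tau σ).range := by
  classical
  have hkermem : ∀ x, x ∈ (tau σ).ker ↔ σ x = x := by
    intro x
    rw [AddMonoidHom.mem_ker, tau_apply, aux_add_eq_zero, eq_comm]
  have hle : (tau σ).range ≤ (tau σ).ker := by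
    rintro _ ⟨x, rfl⟩
    rw [hkermem, tau_apply, map_add, hσ, add_comm]
  have hk : Nat.card (tau σ).ker ≤ q := by
    have hne := FiniteField.X_pow_card_sub_X_ne_zero F hq
    have hsub : ((tau σ).ker : Set F) ⊆
        ((Polynomial.X ^ q - Polynomial.X : Polynomial F).roots.toFinset : Set F) := by
      intro x hx
      have := (hkermem x).1 hx
      rw [hσq] at this
      simp [hne, this]
    have h1 := Set.ncard_le_ncard hsub (Finset.finite_toSet _)
    rw [Set.ncard_coe_finset] at h1
    have h2 := (Multiset.toFinset_card_le _).trans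
      (Polynomial.card_roots' (Polynomial.X ^ q - Polynomial.X : Polynomial F))
    rw [FiniteField.X_pow_card_sub_X_natDegree_eq F hq] at h2
    exact h1.trans h2
  have hprod : Nat.card (tau σ).range * Nat.card (tau σ).ker = q * q := by
    rw [← hc, AddSubgroup.card_eq_card_quotient_mul_card_addSubgroup (tau σ).ker,
      Nat.card_congr (QuotientAddGroup.quotientKerEquivRange (tau σ)).toEquiv]
  have hrk : Nat.card (tau σ).range ≤ Nat.card (tau σ).ker :=
    Nat.card_le_card_of_injective _ (AddSubgroup.inclusion_injective hle)
  have hkq : Nat.card (tau σ).ker = q := by nlinarith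
  have hrq : Nat.card (tau σ).range = q := by
    rw [hkq] at hprod; exact Nat.eq_of_mul_eq_mul_right (by omega) hprod
  refine ⟨hkq, fun y hy => ?_⟩
  have : (tau σ).range = (tau σ).ker := AddSubgroup.eq_of_le_of_card_ge hle (by omega)
  rw [this, hkermem]; exact hy

lemma preimage_card {G : Type} [AddCommGroup G] [Finite G] (t : G →+ G) (S : Finset G)
    (hS : ∀ y ∈ S, y ∈ t.range) : (t ⁻¹' (S : Set G)).ncard = S.card * Nat.card t.ker := by
  classical
  induction S using Finset.induction_on with
  | empty => simp
  | insert y S hy ih =>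
    rw [Finset.coe_insert, Set.insert_eq, Set.preimage_union, Set.ncard_union_eq _ (Set.toFinite _)
      (Set.toFinite _), ih (fun z hz => hS z (Finset.mem_insert_of_mem hz)),
      Finset.card_insert_of_notMem hy, add_mul, one_mul, add_comm]
    · congr 1
      obtain ⟨u, hu⟩ := hS y (Finset.mem_insert_self _ _)
      have : t ⁻¹' {y} = (fun x => u + x) '' (t.ker : Set G) := by
        ext z
        simp only [Set.mem_preimage, Set.mem_singleton_iff, Set.mem_image, SetLike.mem_coe,
          AddMonoidHom.mem_ker]
        constructor
        · intro h
          exact ⟨z - u, by simp [h, hu], by abel⟩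
        · rintro ⟨x, hx, rfl⟩
          simp [hx, hu]
      rw [this, Set.ncard_image_of_injective _ (add_right_injective u)]
      rfl
    · rw [Set.disjoint_left]
      intro z h1 h2
      simp only [Set.mem_preimage, Set.mem_singleton_iff] at h1
      simp only [Set.mem_preimage, h1] at h2
      exact hy h2

lemma card_noncube [Finite F] (σ : F →+* F) (hσ : ∀ x, σ (σ x) = x) (q : ℕ) (hq : 1 < q)
    (hσq : ∀ x, σ x = x ^ q) (hc : Nat.card F = q * q) (a : F) (ha : σ a = a) (ha0 : a ≠ 0)
    (hcube : ¬ ∃ c, σ c = c ∧ c ^ 3 = a) : {b | Cond σ a b}.ncard = q := by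
  have e : {b | Cond σ a b} = ((tau σ).ker : Set F) := by
    ext b
    simp only [Set.mem_ofPred_eq, SetLike.mem_coe, AddMonoidHom.mem_ker, tau_apply]
    rw [cond_fixed σ a b ha ha0, or_iff_left]
    intro h
    refine hcube ⟨(b + σ b)⁻¹, ?_, ?_⟩
    · rw [map_inv₀, map_add, hσ, add_comm]
    · rw [inv_pow]; exact (eq_inv_of_mul_eq_one_left h).symm
  rw [e]
  exact (tau_facts σ hσ q hq hσq hc).1

lemma card_cube [Finite F] (σ : F →+* F) (hσ : ∀ x, σ (σ x) = x) (q : ℕ) (hq : 1 < q)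
    (hσq : ∀ x, σ x = x ^ q) (hc : Nat.card F = q * q) (hq3 : q % 3 = 1)
    (a : F) (ha : σ a = a) (ha0 : a ≠ 0)
    (hcube : ∃ c, σ c = c ∧ c ^ 3 = a) : {b | Cond σ a b}.ncard = 4 * q := by
  classical
  obtain ⟨c, hcσ, rfl⟩ := hcube
  have hc0 : c ≠ 0 := by rintro rfl; simp at ha0
  obtain ⟨w, hw3, hw1⟩ : ∃ w : F, w ^ 3 = 1 ∧ w ≠ 1 := by
    have h3 : 3 ∣ Nat.card Fˣ := by
      rw [Nat.card_units, hc]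
      apply (Nat.modEq_iff_dvd' (by nlinarith)).1
      have : q ≡ 1 [MOD 3] := hq3
      exact (this.mul this).symm
    have : Fact (Nat.Prime 3) := ⟨Nat.prime_three⟩
    obtain ⟨u, hu⟩ := exists_prime_orderOf_dvd_card' (G := Fˣ) 3 h3
    refine ⟨u, ?_, ?_⟩
    · have := pow_orderOf_eq_one u
      rw [hu] at this
      rw [← Units.val_pow_eq_pow_val, this, Units.val_one]
    · intro h
      have : u = 1 := Units.ext h
      rw [this, orderOf_one] at hu
      omega
  have hw0 : w ≠ 0 := by rintro rfl; simp at hw3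
  have hww : w ^ 2 + w + 1 = 0 := by
    have : (w - 1) * (w ^ 2 + w + 1) = 0 := by linear_combination hw3
    exact (mul_eq_zero.1 this).resolve_left (sub_ne_zero.2 hw1)
  have hwσ : σ w = w := by
    rw [hσq, ← Nat.div_add_mod q 3, hq3, pow_add, pow_mul, hw3, one_pow, one_mul, pow_one]
  have hw2 : w ^ 2 ≠ 1 := by
    intro h; apply hw1
    linear_combination hw3 - w * h
  have hw21 : w ≠ w ^ 2 := by
    intro h; apply hw1
    have : w * (w - 1) = 0 := by linear_combination -h
    exact sub_eq_zero.1 ((mul_eq_zero.1 this).resolve_left hw0)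
  let S : Finset F := {0, c⁻¹, w * c⁻¹, w ^ 2 * c⁻¹}
  have hci : c⁻¹ ≠ 0 := inv_ne_zero hc0
  have hScard : S.card = 4 := by
    simp only [S]
    rw [Finset.card_insert_of_notMem, Finset.card_insert_of_notMem, Finset.card_insert_of_notMem,
      Finset.card_singleton]
    · simp only [Finset.mem_singleton]
      exact fun h => hw21 (mul_right_cancel₀ hci h)
    · simp only [Finset.mem_insert, Finset.mem_singleton, not_or]
      exact ⟨fun h => hw1 (mul_right_cancel₀ hci (by rw [← h, one_mul])),
        fun h => hw2 (mul_right_cancel₀ hci (by rw [← h, one_mul]))⟩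
    · simp [hc0, hw0, hc0.symm]
  have hSr : ∀ y ∈ S, y ∈ (tau σ).range := by
    intro y hy
    apply (tau_facts σ hσ q hq hσq hc).2
    simp only [S, Finset.mem_insert, Finset.mem_singleton] at hy
    rcases hy with rfl | rfl | rfl | rfl <;> simp [hwσ, hcσ]
  have e : {b | Cond σ (c ^ 3) b} = tau σ ⁻¹' (S : Set F) := by
    ext b
    simp only [Set.mem_ofPred_eq, Set.mem_preimage, tau_apply, S, Finset.mem_coe,
      Finset.mem_insert, Finset.mem_singleton]
    rw [cond_fixed σ _ b ha ha0]
    generalize b + σ b = B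
    apply or_congr_right
    have e3 : ∀ t : F, B = t * c⁻¹ ↔ c * B - t = 0 := by
      intro t
      rw [← div_eq_mul_inv, eq_div_iff hc0, sub_eq_zero, mul_comm]
    have e4 : B = c⁻¹ ↔ c * B - 1 = 0 := by rw [← e3, one_mul]
    rw [e3, e3, e4, ← mul_eq_zero, ← mul_eq_zero, ← sub_eq_zero]
    have : c ^ 3 * B ^ 3 - 1 = (c * B - 1) * ((c * B - w) * (c * B - w ^ 2)) := by
      linear_combination (c ^ 2 * B ^ 2 - c * B) * hww + (1 - c * B) * hw3
    rw [this]
  rw [e, preimage_card _ _ hSr, hScard, (tau_facts σ hσ q hq hσq hc).1]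

end helpers

lemma tr_add {n : ℕ} (x y : Fq n) : tr (x + y) = tr x + tr y := map_add _ _ _

lemma tr_sq {n : ℕ} (x : Fq n) : tr (x ^ 2) = tr x := by
  have h := Algebra.trace_eq_of_algEquiv
    (FiniteField.frobeniusAlgEquivOfAlgebraic (ZMod 2) (Fq n)) x
  simpa [tr, ZMod.card] using h

lemma tr_pow {n : ℕ} (k : ℕ) (x : Fq n) : tr (x ^ (2 ^ k)) = tr x := by
  induction k with
  | zero => simp
  | succ k ih => rw [pow_succ, pow_mul, tr_sq, ih]

lemma tr_nondeg {n : ℕ} (c : Fq n) (h : ∀ x : Fq n, tr (x ^ 2 * c) = 0) : c = 0 := by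
  by_contra hc
  refine hc ((traceForm_nondegenerate (ZMod 2) (Fq n)).1 c fun y => ?_)
  obtain ⟨x, rfl⟩ := (FiniteField.frobeniusAlgEquivOfAlgebraic (ZMod 2) (Fq n)).surjective y
  have := h x
  rw [mul_comm] at this
  simpa [tr, ZMod.card, Algebra.traceForm_apply] using this

lemma linKer_eq {r n : ℕ} (hn : n = 2 * r) (σ : Fq n →+* Fq n) (hσ : ∀ x, σ x = x ^ (2 ^ r))
    (hσσ : ∀ x, σ (σ x) = x)
    (f : Fq n → ZMod 2) (hf : ∀ x, f x = tr (x ^ (2 ^ r + 3))) (a : Fq n) :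
    linKer (der f a) = {b | Cond σ a b} := by
  have hf' : ∀ x, f x = tr (σ x * x ^ 3) := by
    intro x; rw [hf, pow_add, hσ]
  have trσ : ∀ x, tr (σ x) = tr x := fun x => by rw [hσ, tr_pow]
  have f0 : f 0 = 0 := by rw [hf']; simp [tr]
  have key : ∀ b x, der (der f a) b x + der (der f a) b 0 = tr (x ^ 2 *
      ((σ b * (a + σ a) ^ 2 + σ a * (b + σ b) ^ 2) ^ 2 + (a * σ b + b * σ a))) := by
    intro b x
    have h1 : der (der f a) b x + der (der f a) b 0 =
      tr (σ x * (a ^ 2 * b + b ^ 2 * a) + x * (a ^ 2 * σ b + b ^ 2 * σ a)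
        + x ^ 2 * (a * σ b + b * σ a)) := by
      rw [← aux_expand]
      simp only [der, f0, zero_add, hf', map_add, tr_add]
    rw [h1, mul_add (x ^ 2) (_ ^ 2), tr_add, tr_add, tr_add, ← mul_pow, tr_sq]
    congr 1
    rw [← trσ (σ x * _), ← tr_add]
    congr 1
    simp only [map_add, map_mul, map_pow, hσσ]
    linear_combination (-x * σ a * b * σ b - x * a * σ a * σ b - x * σ b * σ a ^ 2 + x * σ b * σ a ^ 2) * aux_two (F := Fq n)
  ext b
  simp only [linKer, Set.mem_ofPred_eq, Cond]
  constructor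
  · rintro ⟨c, hc⟩
    apply aux_add_eq_zero.1
    apply tr_nondeg
    intro x
    rw [← key, hc, hc, CharTwo.add_self_eq_zero]
  · intro h
    refine ⟨der (der f a) b 0, fun x => ?_⟩
    apply CharTwo.add_eq_zero.1
    rw [key, aux_add_eq_zero.2 h]
    simp [tr]

/-- Linear-kernel sizes for derivatives of `tr(x^(2^r+3))`, `n = 2r`, even `r`. -/
theorem linKer_card_der_even_r (r n : ℕ) (hr : 0 < r) (hreven : Even r) (hn : n = 2 * r)
    (f : Fq n → ZMod 2) (hf : ∀ x, f x = tr (x ^ (2 ^ r + 3))) :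
    ∀ a : Fq n, a ≠ 0 →
      (a ^ (2 ^ r) = a → (∃ c : Fq n, c ^ (2 ^ r) = c ∧ c ^ 3 = a) →
        (linKer (der f a)).ncard = 2 ^ (r + 2)) ∧
      (a ^ (2 ^ r) = a → ¬ (∃ c : Fq n, c ^ (2 ^ r) = c ∧ c ^ 3 = a) →
        (linKer (der f a)).ncard = 2 ^ r) ∧
      (a ^ (2 ^ r) ≠ a → (linKer (der f a)).ncard = 4) := by
  intro a ha0
  let σ : Fq n →+* Fq n := iterateFrobenius (Fq n) 2 r
  have hσ : ∀ x, σ x = x ^ (2 ^ r) := fun x => iterateFrobenius_def _ _ _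
  have hcard : Nat.card (Fq n) = 2 ^ r * 2 ^ r := by
    rw [GaloisField.card 2 n (by omega), hn, two_mul, pow_add]
  have hσσ : ∀ x, σ (σ x) = x := by
    intro x
    have := Fintype.ofFinite (Fq n)
    have := FiniteField.pow_card x
    rw [← Nat.card_eq_fintype_card, hcard, pow_mul] at this
    rw [hσ, hσ, this]
  have hq : 1 < 2 ^ r := Nat.one_lt_two_pow (by omega)
  rw [linKer_eq hn σ hσ hσσ f hf a]
  simp only [← hσ]
  refine ⟨fun ha h => ?_, fun ha h => ?_, fun ha => card_nonfixed σ hσσ a ha⟩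
  · have h3 : 2 ^ r % 3 = 1 := by
      obtain ⟨m, rfl⟩ := hreven
      rw [← two_mul, pow_mul, Nat.pow_mod]
      simp
    rw [card_cube σ hσσ (2 ^ r) hq hσ hcard h3 a ha ha0 h, pow_add]
    ring
  · exact card_noncube σ hσσ (2 ^ r) hq hσ hcard a ha ha0 h
end
end

section
/- Let n be an odd positive integer, and let a, b ∈ F with a ≠ 0 and b ∉ {0, 1}. If the equation R_{a,b}(x) = 0 has exactly 4 solutions x ∈ F, then the equation P_{a,b}(x) = 0 has at most 8 solutions x ∈ F. -/
noncomputable section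

/-- The polynomial map `R_{a,b}` from the paper. -/
def Rpoly {n : ℕ} (a b x : Fq n) : Fq n :=
  a ^ 30 * (b ^ 2 + b) ^ 6 * ((x ^ 2 + x) ^ 2 + (x ^ 2 + x) * (b ^ 2 + b)) ^ 4
    + a ^ 15 * (b ^ 2 + b) ^ 5 * ((x ^ 2 + x) ^ 2 + (x ^ 2 + x) * (b ^ 2 + b))

/-- The polynomial map `Q_{a,b}` from the paper. -/
def Qpoly {n : ℕ} (a b x : Fq n) : Fq n :=
  ((b ^ 2 + b)⁻¹) ^ 4 * Rpoly a b x * (Rpoly a b x + 1)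

/-- The polynomial map `P_{a,b}` from the paper. -/
def Ppoly {n : ℕ} (a b x : Fq n) : Fq n :=
  Qpoly a b x * (Qpoly a b x + 1)

theorem two_eq_zero' {n : ℕ} : (2 : Fq n) = 0 := by
  have := CharP.cast_eq_zero (Fq n) 2
  exact_mod_cast this

theorem exists_sqrt' {n : ℕ} (x : Fq n) : ∃ y : Fq n, y ^ 2 = x := by
  have hb : Function.Bijective (frobenius (Fq n) 2) := by
    exact Finite.injective_iff_bijective.mp (frobenius_inj (Fq n) 2)
  obtain ⟨y, hy⟩ := hb.2 x
  exact ⟨y, by simpa [frobenius_def] using hy⟩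

theorem sq_inj' {n : ℕ} {x y : Fq n} (h : x ^ 2 = y ^ 2) : x = y := by
  apply frobenius_inj (Fq n) 2
  simpa [frobenius_def] using h

theorem exists_cbrt' {n : ℕ} (hn : 0 < n) (hodd : Odd n) (c : Fq n) (hc : c ≠ 0) :
    ∃ d : Fq n, d ^ 3 = c := by
  have hcard : c ^ (2 ^ n) = c := by
    have h := GaloisField.card 2 n hn.ne'
    haveI := Fintype.ofFinite (Fq n)
    have h2 := FiniteField.pow_card c
    rw [← Nat.card_eq_fintype_card, h] at h2
    exact h2
  obtain ⟨k, rfl⟩ := hodd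
  have hdiv : ∃ m, 2 ^ (2 * k + 1) * 2 = 3 * m + 1 := by
    clear hcard
    clear hc c hn
    induction k with
    | zero => exact ⟨1, by norm_num⟩
    | succ k ih =>
      obtain ⟨m, hm⟩ := ih
      refine ⟨4 * m + 1, ?_⟩
      have : 2 ^ (2 * (k + 1) + 1) * 2 = 4 * (2 ^ (2 * k + 1) * 2) := by ring
      omega
  obtain ⟨m, hm⟩ := hdiv
  refine ⟨c ^ m, ?_⟩
  have h1 : c ^ (3 * m + 1) = c ^ 2 := by
    rw [← hm, pow_mul, hcard]
  apply mul_right_cancel₀ hc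
  rw [← pow_mul, mul_comm m 3, ← pow_succ, h1, sq]

/-- additivity -/
theorem Rpoly_add' {n : ℕ} (a b x y : Fq n) :
    Rpoly a b (x + y) = Rpoly a b x + Rpoly a b y := by
  have h2 := two_eq_zero' (n := n)
  have e2 : ∀ u v : Fq n, (u + v) ^ 2 = u ^ 2 + v ^ 2 := fun u v => by
    linear_combination (u * v) * h2
  have e4 : ∀ u v : Fq n, (u + v) ^ 4 = u ^ 4 + v ^ 4 := fun u v => by
    have : (u + v) ^ 4 = ((u + v) ^ 2) ^ 2 := by ring
    rw [this, e2, e2]; ring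
  have hy : (x + y) ^ 2 + (x + y) = (x ^ 2 + x) + (y ^ 2 + y) := by rw [e2]; ring
  unfold Rpoly
  rw [hy]
  generalize x ^ 2 + x = u
  generalize y ^ 2 + y = v
  have hz : (u + v) ^ 2 + (u + v) * (b ^ 2 + b)
    = (u ^ 2 + u * (b ^ 2 + b)) + (v ^ 2 + v * (b ^ 2 + b)) := by rw [e2]; ring
  rw [hz, e4]; ring

theorem exists_quartic' {n : ℕ} (a c i z r : Fq n) (hi : i ≠ 0) (hc : c ≠ 0)
    (h3 : a ^ 15 * c = i ^ 3)
    (hr : a ^ 30 * c ^ 6 * z ^ 4 + a ^ 15 * c ^ 5 * z = r ^ 2) :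
    ∃ m : Fq n, c ^ 2 * i * (m ^ 4 + m) = r := by
  obtain ⟨m, hm⟩ := exists_sqrt' (z * i)
  refine ⟨m, sq_inj' ?_⟩
  have h2 := two_eq_zero' (n := n)
  rw [← hr]
  have e1 : (m ^ 4 + m) ^ 2 = (m ^ 2) ^ 4 + m ^ 2 := by linear_combination (m ^ 5) * h2
  have e2 : a ^ 30 * c ^ 6 * z ^ 4 + a ^ 15 * c ^ 5 * z
    = (a ^ 15 * c) ^ 2 * c ^ 4 * z ^ 4 + (a ^ 15 * c) * c ^ 4 * z := by ring
  rw [mul_pow, e1, e2, h3, hm]; ring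

theorem not_both' (n : ℕ) (hn : 0 < n) (hodd : Odd n)
    (a b : Fq n) (ha : a ≠ 0) (hb0 : b ≠ 0) (hb1 : b ≠ 1)
    (hR : {x : Fq n | Rpoly a b x = 0}.ncard = 4) (x1 x2 : Fq n)
    (h1 : Rpoly a b x1 = 1) (hx2 : Rpoly a b x2 = b ^ 4) : False := by
  have h2 := two_eq_zero' (n := n)
  have hneg : ∀ u v : Fq n, u + v = 0 → u = v := fun u v h => by
    linear_combination h - v * h2
  have hc : b ^ 2 + b ≠ 0 := by
    intro h
    have h' : b * (b + 1) = 0 := by linear_combination h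
    rcases mul_eq_zero.mp h' with h | h
    · exact hb0 h
    · exact hb1 (hneg _ _ h)
  obtain ⟨d, hd⟩ := exists_cbrt' hn hodd _ hc
  have hd0 : d ≠ 0 := by rintro rfl; apply hc; rw [← hd]; ring
  obtain ⟨i, hi⟩ : ∃ i, i = a ^ 5 * d := ⟨_, rfl⟩
  have hi0 : i ≠ 0 := by rw [hi]; exact mul_ne_zero (pow_ne_zero _ ha) hd0
  have h3 : a ^ 15 * (b ^ 2 + b) = i ^ 3 := by rw [hi, ← hd]; ring
  obtain ⟨m, hm⟩ := exists_quartic' a (b ^ 2 + b) i _ 1 hi0 hc h3 (h1.trans (by ring))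
  obtain ⟨k, hk⟩ := exists_quartic' a (b ^ 2 + b) i _ (b ^ 2) hi0 hc h3 (hx2.trans (by ring))
  have hkm : k ^ 4 + k = b ^ 2 * (m ^ 4 + m) := by
    apply mul_left_cancel₀ (mul_ne_zero (pow_ne_zero 2 hc) hi0)
    linear_combination hk - b ^ 2 * hm
  obtain ⟨u, hu⟩ : ∃ u, u = m ^ 2 + m := ⟨_, rfl⟩
  have hut : u ^ 2 + u = m ^ 4 + m := by
    rw [hu]; linear_combination (m ^ 3 + m ^ 2) * h2
  obtain ⟨x, hx⟩ : ∃ x, x = b * u + k ^ 2 + k := ⟨_, rfl⟩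
  have hxx : x ^ 2 + x = (b ^ 2 + b) * u := by
    have e : x ^ 2 + x = b ^ 2 * u ^ 2 + b * u + (k ^ 4 + k) := by
      rw [hx]; linear_combination (b * u * k ^ 2 + b * u * k + k ^ 3 + k ^ 2) * h2
    rw [e, hkm, ← hut]; linear_combination (b ^ 2 * u ^ 2) * h2
  have hz : ((x ^ 2 + x) ^ 2 + (x ^ 2 + x) * (b ^ 2 + b)) * i = 1 := by
    rw [hxx, ← hm, ← hut]; ring
  have hRx : Rpoly a b x = 0 := by
    unfold Rpoly
    generalize (x ^ 2 + x) ^ 2 + (x ^ 2 + x) * (b ^ 2 + b) = z at hz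
    generalize b ^ 2 + b = c at *
    have e2 : a ^ 30 * c ^ 6 * z ^ 4 + a ^ 15 * c ^ 5 * z
      = (a ^ 15 * c) ^ 2 * c ^ 4 * z ^ 4 + (a ^ 15 * c) * c ^ 4 * z := by ring
    rw [e2, h3]
    have e3 : (i ^ 3) ^ 2 * c ^ 4 * z ^ 4 + i ^ 3 * c ^ 4 * z
      = (z * i) ^ 4 * i ^ 2 * c ^ 4 + (z * i) * i ^ 2 * c ^ 4 := by ring
    rw [e3, hz]; linear_combination (i ^ 2 * c ^ 4) * h2
  have hL : ∀ y : Fq n, (y ^ 2 + y) ^ 2 + (y ^ 2 + y) * (b ^ 2 + b) = 0 →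
      x ≠ y ∧ Rpoly a b y = 0 := by
    intro y hy
    constructor
    · rintro rfl
      rw [hy] at hz
      simp at hz
    · unfold Rpoly; rw [hy]; ring
  have k0 := hL 0 (by ring)
  have k1 := hL 1 (by linear_combination (2 + b ^ 2 + b) * h2)
  have k2 := hL b (by linear_combination (b ^ 2 + b) ^ 2 * h2)
  have k3 := hL (b + 1) (by
    have : (b + 1) ^ 2 + (b + 1) = b ^ 2 + b := by linear_combination (b + 1) * h2
    rw [this]; linear_combination (b ^ 2 + b) ^ 2 * h2)
  have hb1' : b + 1 ≠ 0 := fun h => hb1 (hneg _ _ h)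
  classical
  have hsub : (({x, 0, 1, b, b + 1} : Finset (Fq n)) : Set (Fq n)) ⊆
      {x : Fq n | Rpoly a b x = 0} := by
    intro y hy
    simp at hy
    rcases hy with rfl | rfl | rfl | rfl | rfl
    exacts [hRx, k0.2, k1.2, k2.2, k3.2]
  have hcard : ({x, 0, 1, b, b + 1} : Finset (Fq n)).card = 5 := by
    rw [Finset.card_insert_of_notMem, Finset.card_insert_of_notMem,
      Finset.card_insert_of_notMem, Finset.card_insert_of_notMem, Finset.card_singleton]
    · simp
    · simp [hb1.symm, hb0]
    · simp [hb0.symm, hb1'.symm]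
    · simp [k0.1, k1.1, k2.1, k3.1]
  have := Set.ncard_le_ncard hsub (Set.toFinite _)
  rw [Set.ncard_coe_finset, hcard, hR] at this
  omega

theorem Ppoly_cases' {n : ℕ} (a b x : Fq n) (hc : b ^ 2 + b ≠ 0) (h : Ppoly a b x = 0) :
    Rpoly a b x = 0 ∨ Rpoly a b x = 1 ∨ Rpoly a b x = b ^ 4 ∨ Rpoly a b x = b ^ 4 + 1 := by
  have h2 := two_eq_zero' (n := n)
  have hneg : ∀ u v : Fq n, u + v = 0 → u = v := fun u v h => by
    linear_combination h - v * h2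
  unfold Ppoly Qpoly at h
  generalize Rpoly a b x = r at *
  have hinv : (b ^ 2 + b) ^ 4 * ((b ^ 2 + b)⁻¹) ^ 4 = 1 := by
    rw [← mul_pow, mul_inv_cancel₀ hc, one_pow]
  generalize ((b ^ 2 + b)⁻¹) ^ 4 = j at *
  rcases mul_eq_zero.mp h with h | h
  · have : r * (r + 1) = 0 := by
      linear_combination (b ^ 2 + b) ^ 4 * h - r * (r + 1) * hinv
    rcases mul_eq_zero.mp this with h | h
    · exact Or.inl h
    · exact Or.inr (Or.inl (hneg _ _ h))
  · have h' : r ^ 2 + r + (b ^ 2 + b) ^ 4 = 0 := by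
      linear_combination (b ^ 2 + b) ^ 4 * h - r * (r + 1) * hinv
    have : (r + b ^ 4) * (r + (b ^ 4 + 1)) = 0 := by
      linear_combination h' + (r * b ^ 4 - 2 * b ^ 7 - 3 * b ^ 6 - 2 * b ^ 5) * h2
    rcases mul_eq_zero.mp this with h | h
    · exact Or.inr (Or.inr (Or.inl (hneg _ _ h)))
    · exact Or.inr (Or.inr (Or.inr (hneg _ _ h)))

/-- Odd `n`: exactly 4 roots of `R_{a,b}` implies at most 8 roots of `P_{a,b}`. -/
theorem Ppoly_roots_le_eight (n : ℕ) (hn : 0 < n) (hodd : Odd n)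
    (a b : Fq n) (ha : a ≠ 0) (hb0 : b ≠ 0) (hb1 : b ≠ 1)
    (hR : {x : Fq n | Rpoly a b x = 0}.ncard = 4) :
    {x : Fq n | Ppoly a b x = 0}.ncard ≤ 8 := by
  have h2 := two_eq_zero' (n := n)
  have hneg : ∀ u v : Fq n, u + v = 0 → u = v := fun u v h => by
    linear_combination h - v * h2
  have hc : b ^ 2 + b ≠ 0 := by
    intro h
    have h' : b * (b + 1) = 0 := by linear_combination h
    rcases mul_eq_zero.mp h' with h | h
    · exact hb0 h
    · exact hb1 (hneg _ _ h)
  have nb := not_both' n hn hodd a b ha hb0 hb1 hR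
  by_cases hex : ∃ x0, Ppoly a b x0 = 0 ∧ Rpoly a b x0 ≠ 0
  · obtain ⟨x0, hP0, hR0⟩ := hex
    have hsub : {x : Fq n | Ppoly a b x = 0} ⊆ {x : Fq n | Rpoly a b x = 0} ∪
        (fun x => x + x0) '' {x : Fq n | Rpoly a b x = 0} := by
      intro x hx
      have hadd := Rpoly_add' a b x x0
      by_cases hRx : Rpoly a b x = 0
      · exact Or.inl hRx
      by_cases he : Rpoly a b x = Rpoly a b x0
      · refine Or.inr ⟨x + x0, ?_, ?_⟩
        · change Rpoly a b (x + x0) = 0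
          rw [hadd, he]; linear_combination Rpoly a b x0 * h2
        · change x + x0 + x0 = x
          linear_combination x0 * h2
      exfalso
      rcases Ppoly_cases' a b x hc hx with h | h | h | h <;>
      rcases Ppoly_cases' a b x0 hc hP0 with h' | h' | h' | h' <;>
      first
      | exact hRx h
      | exact hR0 h'
      | exact he (h.trans h'.symm)
      | exact nb x x0 h h'
      | exact nb x0 x h' h
      | exact nb x (x + x0) h (by rw [hadd, h, h']; linear_combination h2)
      | exact nb x0 (x + x0) h' (by rw [hadd, h, h']; linear_combination h2)
      | exact nb (x + x0) x (by rw [hadd, h, h']; linear_combination b ^ 4 * h2) h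
      | exact nb (x + x0) x0 (by rw [hadd, h, h']; linear_combination b ^ 4 * h2) h'
    calc _ ≤ _ := Set.ncard_le_ncard hsub (Set.toFinite _)
      _ ≤ _ := Set.ncard_union_le _ _
      _ ≤ 4 + 4 := by
        have := Set.ncard_image_le (f := fun x => x + x0)
          (Set.toFinite {x : Fq n | Rpoly a b x = 0})
        omega
  · push Not at hex
    have hsub : {x : Fq n | Ppoly a b x = 0} ⊆ {x : Fq n | Rpoly a b x = 0} :=
      fun x hx => hex x hx
    have := Set.ncard_le_ncard hsub (Set.toFinite _)
    omega
end
end
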